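/- Let n ≥ 2, 1 < r < ∞, and let Ω ∈ L^{r,∞}(𝕊^{n−1}) have mean zero. Then there is C such that for all f ∈ C_c^∞(ℝ^n), ‖M^♮_Ω f‖_{L^∞(ℝ^n)} ≤ ‖M^#_Ω f‖_{L^∞(ℝ^n)} ≤ C ‖∇f‖_{L^n(ℝ^n)}. -/

import Mathlib

open MeasureTheory Metric Set Filter
open scoped ENNReal NNReal Topology

noncomputable section

abbrev Rn (n : ℕ) := EuclideanSpace ℝ (Fin n)

/-- An axis-parallel half-open cube in `ℝⁿ`. -/
structure Cube (n : ℕ) where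
  corner : Fin n → ℝ
  side : ℝ
  side_pos : 0 < side

/-- The set of points of a cube. -/
def Cube.carrier {n : ℕ} (Q : Cube n) : Set (Rn n) :=
  {x | ∀ i, Q.corner i ≤ x i ∧ x i < Q.corner i + Q.side}

/-- Surface measure on the unit sphere `𝕊^{n-1} ⊆ ℝⁿ`. -/
def sphereMeasure (n : ℕ) : Measure (Rn n) :=
  (MeasureTheory.Measure.hausdorffMeasure ((n : ℝ) - 1)).restrict (sphere (0 : Rn n) 1)

/-- `f ∈ C_c^∞(ℝⁿ)`. -/
def IsCcSmooth {n : ℕ} (f : Rn n → ℝ) : Prop :=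
  ContDiff ℝ (⊤ : ℕ∞) f ∧ HasCompactSupport f

/-- Truncated rough fractional singular integral. -/
def roughOpTrunc (n : ℕ) (α : ℝ) (Ω f : Rn n → ℝ) (x : Rn n) (ε : ℝ) : ℝ :=
  ∫ y in {y : Rn n | ε < ‖y‖}, (Ω (‖y‖⁻¹ • y) / ‖y‖ ^ ((n : ℝ) + 1 - α)) * f (x - y)

/-- The rough fractional singular integral `T_{Ω,α} f`, as a principal value. -/
def roughOp (n : ℕ) (α : ℝ) (Ω f : Rn n → ℝ) (x : Rn n) : ℝ :=
  limUnder (𝓝[>] (0 : ℝ)) (roughOpTrunc n α Ω f x)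

/-- Riesz potential (modulo its normalizing constant) of a nonnegative function. -/
def rieszPot (n : ℕ) (α : ℝ) (g : Rn n → ℝ) (x : Rn n) : ℝ≥0∞ :=
  ∫⁻ y, ENNReal.ofReal (g y) / ENNReal.ofReal (‖x - y‖ ^ ((n : ℝ) - α))

/-- `|∇f|`. -/
def gradNorm {n : ℕ} (f : Rn n → ℝ) (y : Rn n) : ℝ := ‖gradient f y‖

/-- Weak Lorentz norm `‖Ω‖_{L^{r,∞}(𝕊^{n-1})}`. -/
def weakLorentzSphere (n : ℕ) (r : ℝ) (Ω : Rn n → ℝ) : ℝ≥0∞ :=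
  ⨆ (t : ℝ) (_ : 0 < t), ENNReal.ofReal t * sphereMeasure n {y | t < |Ω y|} ^ (1 / r)

/-- Lorentz norm `‖Ω‖_{L^{r,q}(𝕊^{n-1})}`. -/
def lorentzSphere (n : ℕ) (r q : ℝ) (Ω : Rn n → ℝ) : ℝ≥0∞ :=
  (ENNReal.ofReal r *
      ∫⁻ t in Ioi (0 : ℝ),
        ENNReal.ofReal t ^ q * sphereMeasure n {y | t < |Ω y|} ^ (q / r) / ENNReal.ofReal t) ^ (1 / q)

/-- The Young function `Φ(t) = t log(1+t)^{1/n'}`, `1/n' = (n-1)/n`. -/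
def orliczYoung (n : ℕ) (t : ℝ) : ℝ := t * Real.log (1 + t) ^ (((n : ℝ) - 1) / n)

/-- Admissible Orlicz levels for the `L(log L)^{1/n'}` norm w.r.t. normalized surface measure. -/
def orliczSet (n : ℕ) (Ω : Rn n → ℝ) : Set ℝ :=
  {lam | 0 < lam ∧ ⨍ y, orliczYoung n (|Ω y| / lam) ∂sphereMeasure n ≤ 1}

/-- Orlicz norm `‖Ω‖_{L(log L)^{1/n'}(𝕊^{n-1})}`. -/
def orliczSphereNorm (n : ℕ) (Ω : Rn n → ℝ) : ℝ := sInf (orliczSet n Ω)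

/-- A sparse family of cubes. -/
def IsSparse {n : ℕ} (𝒮 : Set (Cube n)) : Prop :=
  ∃ E : Cube n → Set (Rn n),
    (∀ Q ∈ 𝒮, E Q ⊆ Q.carrier ∧ volume Q.carrier ≤ 2 * volume (E Q)) ∧
    𝒮.Pairwise fun Q P => Disjoint (E Q) (E P)

/-- A dyadic grid of cubes. -/
def IsDyadicGrid {n : ℕ} (𝒟 : Set (Cube n)) : Prop :=
  (∀ Q ∈ 𝒟, ∃ k : ℤ, Q.side = (2 : ℝ) ^ k) ∧
  (∀ (k : ℤ) (x : Rn n), ∃! Q : Cube n, Q ∈ 𝒟 ∧ Q.side = (2 : ℝ) ^ k ∧ x ∈ Q.carrier) ∧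
  (∀ Q ∈ 𝒟, ∀ P ∈ 𝒟, Disjoint Q.carrier P.carrier ∨ Q.carrier ⊆ P.carrier ∨ P.carrier ⊆ Q.carrier)

/-- The shifted dyadic grid `𝒟_t = {2^k([0,1)^n + m + (-1)^k t)}`. -/
def shiftedGrid (n : ℕ) (t : Fin n → ℝ) : Set (Cube n) :=
  {Q | ∃ (k : ℤ) (m : Fin n → ℤ),
      Q.side = (2 : ℝ) ^ k ∧ Q.corner = fun i => (2 : ℝ) ^ k * ((m i : ℝ) + (-1 : ℝ) ^ k * t i)}

/-- `(⨍_Q |g|^s)^{1/s}` as an extended nonnegative real. -/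
def avgLs (n : ℕ) (s : ℝ) (Q : Cube n) (g : Rn n → ℝ) : ℝ≥0∞ :=
  ((volume Q.carrier)⁻¹ * ∫⁻ y in Q.carrier, ENNReal.ofReal |g y| ^ s) ^ (1 / s)

/-- The `L^s` sparse (or dyadic) fractional operator `I^𝒮_{α,L^s}`. -/
def sparseOpLs (n : ℕ) (α s : ℝ) (𝒮 : Set (Cube n)) (g : Rn n → ℝ) (x : Rn n) : ℝ≥0∞ :=
  ∑' Q : 𝒮, Set.indicator (Q : Cube n).carrier
      (fun _ => ENNReal.ofReal ((Q : Cube n).side ^ α) * avgLs n s (Q : Cube n) g) x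

/-- The `L^s` fractional maximal operator `M_{α,L^s}`. -/
def maxOpLs (n : ℕ) (α s : ℝ) (g : Rn n → ℝ) (x : Rn n) : ℝ≥0∞ :=
  ⨆ (Q : Cube n) (_ : x ∈ Q.carrier), ENNReal.ofReal (Q.side ^ α) * avgLs n s Q g

/-- The measure `w dx` associated with a weight `w`. -/
def wMeasure (n : ℕ) (w : Rn n → ℝ) : Measure (Rn n) :=
  volume.withDensity fun x => ENNReal.ofReal (w x)

/-- Muckenhoupt `A_∞` (via the standard fair-proportion characterization). -/
def IsAinfty {n : ℕ} (w : Rn n → ℝ) : Prop :=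
  ∃ C > (0 : ℝ), ∃ δ > (0 : ℝ), ∀ Q : Cube n, ∀ S ⊆ Q.carrier, MeasurableSet S →
    wMeasure n w S ≤
      ENNReal.ofReal C * (volume S / volume Q.carrier) ^ δ * wMeasure n w Q.carrier

/-- `‖g‖_{L^p(w)}` for an `ℝ≥0∞`-valued `g`. -/
def lpNormW (n : ℕ) (p : ℝ) (w : Rn n → ℝ) (g : Rn n → ℝ≥0∞) : ℝ≥0∞ :=
  (∫⁻ x, g x ^ p ∂wMeasure n w) ^ (1 / p)

/-- `‖g‖_{L^{p,∞}(w)}` for an `ℝ≥0∞`-valued `g`. -/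
def weakNormW (n : ℕ) (p : ℝ) (w : Rn n → ℝ) (g : Rn n → ℝ≥0∞) : ℝ≥0∞ :=
  ⨆ (lam : ℝ) (_ : 0 < lam),
    ENNReal.ofReal lam * wMeasure n w {x | ENNReal.ofReal lam < g x} ^ (1 / p)

/-- Unweighted `L^p` "norm" of an `ℝ≥0∞`-valued function. -/
def lqNorm (n : ℕ) (p : ℝ) (g : Rn n → ℝ≥0∞) : ℝ≥0∞ :=
  (∫⁻ x, g x ^ p) ^ (1 / p)

/-- Unweighted weak `L^p` norm of an `ℝ≥0∞`-valued function. -/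
def weakNorm (n : ℕ) (p : ℝ) (g : Rn n → ℝ≥0∞) : ℝ≥0∞ :=
  ⨆ (lam : ℝ) (_ : 0 < lam),
    ENNReal.ofReal lam * volume {x | ENNReal.ofReal lam < g x} ^ (1 / p)

/-- Maximal function of a measure over cubes. -/
def measMax (n : ℕ) (μ : Measure (Rn n)) (x : Rn n) : ℝ≥0∞ :=
  ⨆ (Q : Cube n) (_ : x ∈ Q.carrier), μ Q.carrier / volume Q.carrier

/-- The rough fractional maximal operator `M_{Ω,α}`. -/
def roughMax (n : ℕ) (α : ℝ) (Ω f : Rn n → ℝ) (x : Rn n) : ℝ≥0∞ :=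
  ⨆ (t : ℝ) (_ : 0 < t),
    ENNReal.ofReal (t ^ (α - 1)) * ((volume (ball (0 : Rn n) t))⁻¹ *
      ∫⁻ y in ball (0 : Rn n) t, ENNReal.ofReal |Ω (‖y‖⁻¹ • y) * f (x - y)|)

/-- Average of `f` over the ball `B(x,t)`. -/
def ballAvg {n : ℕ} (f : Rn n → ℝ) (x : Rn n) (t : ℝ) : ℝ :=
  ⨍ y in ball x t, f y

/-- The sharp rough fractional maximal operator `M^#_{Ω,α}`. -/
def roughMaxSharp (n : ℕ) (α : ℝ) (Ω f : Rn n → ℝ) (x : Rn n) : ℝ≥0∞ :=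
  ⨆ (t : ℝ) (_ : 0 < t),
    ENNReal.ofReal (t ^ (α - 1)) * ((volume (ball (0 : Rn n) t))⁻¹ *
      ∫⁻ y in ball (0 : Rn n) t,
        ENNReal.ofReal (|Ω (‖y‖⁻¹ • y)| * |f (x - y) - ballAvg f x t|))

/-- The natural rough maximal operator `M^♮_Ω` (with `α = 1`). -/
def roughMaxNatural (n : ℕ) (Ω f : Rn n → ℝ) (x : Rn n) : ℝ≥0∞ :=
  ⨆ (t : ℝ) (_ : 0 < t),
    ENNReal.ofReal |⨍ y in ball (0 : Rn n) t, Ω (‖y‖⁻¹ • y) * f (x - y)|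

/-- The fractional spherical maximal operator `𝒮_β`. -/
def sphMax (n : ℕ) (β : ℝ) (f : Rn n → ℝ) (x : Rn n) : ℝ≥0∞ :=
  ⨆ (r : ℝ) (_ : 0 < r),
    ENNReal.ofReal (r ^ β) *
      ((MeasureTheory.Measure.hausdorffMeasure ((n : ℝ) - 1) (sphere x r))⁻¹ *
        ∫⁻ y in sphere x r, ENNReal.ofReal |f y|
          ∂(MeasureTheory.Measure.hausdorffMeasure ((n : ℝ) - 1)))


/-- The measure `w^q dx`. -/
def wqMeasure (n : ℕ) (q : ℝ) (w : Rn n → ℝ) : Measure (Rn n) :=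
  volume.withDensity fun x => ENNReal.ofReal (w x) ^ q

/-- Weak norm `‖g‖_{L^{q,∞}(w^q)}` for `ℝ≥0∞`-valued `g`. -/
def weakNormWq (n : ℕ) (q : ℝ) (w : Rn n → ℝ) (g : Rn n → ℝ≥0∞) : ℝ≥0∞ :=
  ⨆ (lam : ℝ) (_ : 0 < lam),
    ENNReal.ofReal lam * wqMeasure n q w {x | ENNReal.ofReal lam < g x} ^ (1 / q)

/-!
Polar coordinates transfer the hypotheses on `Ω` from the sphere to balls: the image of Lebesgue
measure on a ball under `y ↦ y / |y|` is rotation invariant, hence a multiple of surface measure,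
because a finite measure giving the same mass to all balls of equal radius is unique up to a factor.
Mean zero then allows subtracting the constant `f_{B(x,t)}` under the integral defining `M^♮_Ω`,
which gives the first inequality.

For the second, fix `1 < q < r`, so that `Ω ∈ L^q`. By the fundamental theorem of calculus
`|f(y) - f_B|` is at most `diam B` times the average over `z ∈ B` and `s ∈ (0, 1)` of `|∇f|` at
`(1 - s) z + s y`. For fixed `s`, write `G_s(y)` for the average over `z`. Hölder and scaling give
`G_s ≤ (1 - s)⁻¹ m` with `m = (|B|⁻¹ ∫ |∇f|^n)^{1/n}`, while the average of `G_s` over `B` is at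
most `2 m`, since one of `s`, `1 - s` is at least `1/2`. Hölder against `|Ω|` with exponent `q` thus
costs only the factor `(1 - s)^{-1/q}`, which is integrable on `(0, 1)`, and `diam B · m` does not
depend on the radius of `B`.
-/

section UniformDistribution

variable {X : Type*} [PseudoMetricSpace X] [MeasurableSpace X]

/-- A measure `μ` is uniformly distributed on `S` if it is carried by `S` and gives the same mass to
all balls of a given radius centred in `S`. On the unit sphere this is what rotation invariance
provides, and it determines a finite measure up to a constant factor. -/
structure UniformlyDistributedOn (μ : Measure X) (S : Set X) : Prop where
  ae_mem : ∀ᵐ x ∂μ, x ∈ S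
  measure_ball_eq : ∀ x ∈ S, ∀ y ∈ S, ∀ r, μ (ball x r) = μ (ball y r)

namespace UniformlyDistributedOn

variable [SecondCountableTopology X] {μ ν : Measure X} {S : Set X}

lemma measure_ball_ne_zero (hμ : UniformlyDistributedOn μ S) (hμ0 : μ ≠ 0) {x : X} (hx : x ∈ S)
    {r : ℝ} (hr : 0 < r) : μ (ball x r) ≠ 0 := by
  intro hball
  have hS : μ S = 0 := measure_null_of_locally_null S fun y hy =>
    ⟨ball y r, mem_nhdsWithin_of_mem_nhds (ball_mem_nhds y hr),
      (hμ.measure_ball_eq y hy x hx r).trans hball⟩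
  refine hμ0 (Measure.measure_univ_eq_zero.1 ?_)
  exact (measure_congr (eventuallyEq_univ.2 hμ.ae_mem)).symm.trans hS

variable [BorelSpace X]

lemma measure_ball_mul_measure_le [SFinite μ] [SFinite ν] (hμ : UniformlyDistributedOn μ S)
    (hν : UniformlyDistributedOn ν S) {x : X} (hx : x ∈ S) (r : ℝ) (F : Set X) :
    ν (ball x r) * μ F ≤ μ (ball x r) * ν (thickening r F) := by
  -- Both sides compare with the `μ ⊗ ν`-measure of the pairs in `F × X` at distance `< r`.
  let D : Set (X × X) := {p | dist p.1 p.2 < r}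
  have hD : MeasurableSet D := (isOpen_lt (by fun_prop) (by fun_prop)).measurableSet
  have fst_section (y : X) : (fun x => (x, y)) ⁻¹' D = ball y r := rfl
  have snd_section (y : X) : Prod.mk y ⁻¹' D = ball y r := by
    ext z
    exact mem_ball'.symm
  have ball_inter_of_notMem {y : X} (hy : y ∉ thickening r F) : ball y r ∩ F = ∅ := by
    refine eq_empty_of_forall_notMem fun z hz => hy (mem_thickening_iff.2 ⟨z, hz.2, ?_⟩)
    exact mem_ball'.1 hz.1
  calc ν (ball x r) * μ F
      = ∫⁻ y, ν (Prod.mk y ⁻¹' D) ∂μ.restrict F := by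
        have : ∀ᵐ y ∂μ.restrict F, ν (Prod.mk y ⁻¹' D) = ν (ball x r) := by
          filter_upwards [ae_restrict_of_ae hμ.ae_mem] with y hy
          rw [snd_section, hν.measure_ball_eq y hy x hx]
        rw [lintegral_congr_ae this, lintegral_const, Measure.restrict_apply_univ]
    _ = ∫⁻ y, μ.restrict F ((fun x => (x, y)) ⁻¹' D) ∂ν := by
        rw [← Measure.prod_apply hD, Measure.prod_apply_symm hD]
    _ ≤ ∫⁻ y, (thickening r F).indicator (fun _ => μ (ball x r)) y ∂ν := by
        refine lintegral_mono_ae ?_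
        filter_upwards [hν.ae_mem] with y hy
        rw [fst_section]
        by_cases hyF : y ∈ thickening r F
        · rw [indicator_of_mem hyF, hμ.measure_ball_eq x hx y hy]
          exact Measure.restrict_apply_le _ _
        · rw [indicator_of_notMem hyF, Measure.restrict_apply measurableSet_ball,
            ball_inter_of_notMem hyF, measure_empty]
    _ = μ (ball x r) * ν (thickening r F) :=
        lintegral_indicator_const isOpen_thickening.measurableSet _

variable [IsFiniteMeasure μ] [IsFiniteMeasure ν]

lemma measure_univ_mul_measure_le_thickening (hμ : UniformlyDistributedOn μ S)
    (hν : UniformlyDistributedOn ν S) {r : ℝ} (hr : 0 < r) (F : Set X) :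
    ν univ * μ F ≤ μ univ * ν (thickening r F) := by
  rcases eq_or_ne ν 0 with rfl | hν0
  · simp
  have : NeZero ν := ⟨hν0⟩
  obtain ⟨x, hx⟩ := hν.ae_mem.exists
  have thickening_univ : thickening r (univ : Set X) = univ :=
    univ_subset_iff.1 (self_subset_thickening hr _)
  have total : ν (ball x r) * μ univ = μ (ball x r) * ν univ :=
    le_antisymm (by simpa only [thickening_univ] using hμ.measure_ball_mul_measure_le hν hx r univ)
      (by simpa only [thickening_univ] using hν.measure_ball_mul_measure_le hμ hx r univ)
  refine (ENNReal.mul_le_mul_iff_right (hν.measure_ball_ne_zero hν0 hx hr)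
    (measure_ne_top ν _)).1 ?_
  calc ν (ball x r) * (ν univ * μ F)
      = ν univ * (ν (ball x r) * μ F) := by ring
    _ ≤ ν univ * (μ (ball x r) * ν (thickening r F)) :=
        mul_le_mul' le_rfl (hμ.measure_ball_mul_measure_le hν hx r F)
    _ = μ (ball x r) * ν univ * ν (thickening r F) := by ring
    _ = ν (ball x r) * (μ univ * ν (thickening r F)) := by rw [← total]; ring

lemma measure_univ_mul_measure_le_of_isClosed (hμ : UniformlyDistributedOn μ S)
    (hν : UniformlyDistributedOn ν S) {F : Set X} (hF : IsClosed F) :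
    ν univ * μ F ≤ μ univ * ν F := by
  have thickening_tendsto : Tendsto (fun r => ν (thickening r F)) (𝓝[>] 0) (𝓝 (ν F)) :=
    tendsto_measure_thickening_of_isClosed ⟨1, one_pos, measure_ne_top _ _⟩ hF
  refine ge_of_tendsto
    (ENNReal.Tendsto.const_mul thickening_tendsto (Or.inr (measure_ne_top μ univ))) ?_
  filter_upwards [self_mem_nhdsWithin] with r hr
  exact hμ.measure_univ_mul_measure_le_thickening hν hr F

theorem measure_univ_smul_eq (hμ : UniformlyDistributedOn μ S)
    (hν : UniformlyDistributedOn ν S) : ν univ • μ = μ univ • ν := by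
  have : IsFiniteMeasure (ν univ • μ) := μ.smul_finite (measure_ne_top ν univ)
  refine ext_of_generate_finite _ (BorelSpace.measurable_eq.trans borel_eq_generateFrom_isClosed)
    isPiSystem_isClosed (fun F hF => ?_) (mul_comm _ _)
  exact le_antisymm (hμ.measure_univ_mul_measure_le_of_isClosed hν hF)
    (hν.measure_univ_mul_measure_le_of_isClosed hμ hF)

end UniformlyDistributedOn

lemma uniformlyDistributedOn_sphere {E : Type*} [NormedAddCommGroup E] [InnerProductSpace ℝ E]
    [MeasurableSpace E] [OpensMeasurableSpace E] {μ : Measure E} {ρ : ℝ}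
    (hmem : ∀ᵐ x ∂μ, x ∈ sphere (0 : E) ρ)
    (hinv : ∀ e : E ≃ₗᵢ[ℝ] E, MeasurePreserving e μ μ) :
    UniformlyDistributedOn μ (sphere (0 : E) ρ) where
  ae_mem := hmem
  measure_ball_eq x hx y hy r := by
    let e : E ≃ₗᵢ[ℝ] E := (ℝ ∙ (x - y))ᗮ.reflection
    have hxy : ‖x‖ = ‖y‖ :=
      (mem_sphere_zero_iff_norm.1 hx).trans (mem_sphere_zero_iff_norm.1 hy).symm
    have hex : e.symm y = x := e.symm_apply_eq.2 (Submodule.reflection_sub hxy).symm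
    calc μ (ball x r) = μ (e ⁻¹' ball y r) := by rw [e.preimage_ball, hex]
      _ = μ (ball y r) := (hinv e).measure_preimage measurableSet_ball.nullMeasurableSet

end UniformDistribution

section SphereHausdorffMeasure

open Module Measure RealInnerProductSpace

variable {E : Type*} [NormedAddCommGroup E] [InnerProductSpace ℝ E]

lemma cast_finrank_orthogonal_span_singleton [FiniteDimensional ℝ E] {v : E} (hv : v ≠ 0) :
    (finrank ℝ (ℝ ∙ v)ᗮ : ℝ) = finrank ℝ E - 1 := by
  rw [← (ℝ ∙ v).finrank_add_finrank_orthogonal, finrank_span_singleton hv]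
  push_cast
  ring

lemma hemisphere_subset_image_stereoInvFunAux {v : E} (hv : ‖v‖ = 1) :
    {x ∈ sphere (0 : E) 1 | ⟪v, x⟫ ≤ 0} ⊆
      (fun w : (ℝ ∙ v)ᗮ => stereoInvFunAux v w) '' closedBall 0 2 := by
  rintro x ⟨hx, hvx⟩
  have hxv : x ≠ v := by
    rintro rfl
    rw [real_inner_self_eq_norm_sq, hv] at hvx
    norm_num at hvx
  refine ⟨stereoToFun v x, ?_, ?_⟩
  · have hcoeff : ‖2 / (1 - ⟪v, x⟫)‖ ≤ 2 := by
      rw [Real.norm_of_nonneg (by apply div_nonneg <;> linarith), div_le_iff₀ (by linarith)]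
      linarith
    rw [mem_closedBall_zero_iff, stereoToFun_apply, norm_smul]
    calc _ ≤ 2 * ‖x‖ := mul_le_mul hcoeff ((ℝ ∙ v)ᗮ.norm_orthogonalProjectionOnto_apply_le x)
          (norm_nonneg _) zero_le_two
      _ = 2 := by rw [mem_sphere_zero_iff_norm.1 hx, mul_one]
  · exact congrArg Subtype.val (stereo_left_inv hv (x := ⟨x, hx⟩) hxv)

lemma ball_subset_image_sphere_orthogonalProjection {v : E} (hv : ‖v‖ = 1) :
    ball (0 : (ℝ ∙ v)ᗮ) 1 ⊆ (ℝ ∙ v)ᗮ.orthogonalProjectionOnto '' sphere (0 : E) 1 := by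
  intro w hw
  have hw1 : ‖w‖ ^ 2 ≤ 1 := pow_le_one₀ (norm_nonneg w) (mem_ball_zero_iff.1 hw).le
  have hwv : ⟪(w : E), √(1 - ‖w‖ ^ 2) • v⟫ = 0 := by
    rw [inner_smul_right, Submodule.mem_orthogonal_singleton_iff_inner_left.1 w.2, mul_zero]
  refine ⟨w + √(1 - ‖w‖ ^ 2) • v, ?_, ?_⟩
  · rw [mem_sphere_zero_iff_norm, ← sq_eq_sq₀ (norm_nonneg _) zero_le_one, sq,
      norm_add_sq_eq_norm_sq_add_norm_sq_of_inner_eq_zero _ _ hwv, norm_smul, hv,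
      Real.norm_of_nonneg (Real.sqrt_nonneg _), mul_one, Real.mul_self_sqrt (by linarith),
      Submodule.coe_norm]
    ring
  · rw [map_add, Submodule.orthogonalProjectionOnto_mem_subspace_eq_self, map_smul,
      Submodule.orthogonalProjectionOnto_orthogonal_apply_eq_zero
        (Submodule.mem_span_singleton_self v), smul_zero, add_zero]

variable [FiniteDimensional ℝ E] [MeasurableSpace E] [BorelSpace E]

lemma hausdorffMeasure_hemisphere_lt_top {v : E} (hv : ‖v‖ = 1) :
    μH[finrank ℝ E - 1] {x ∈ sphere (0 : E) 1 | ⟪v, x⟫ ≤ 0} < ∞ := by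
  obtain ⟨K, hK⟩ := (contDiff_stereoInvFunAux.comp
    (ℝ ∙ v)ᗮ.subtypeL.contDiff).contDiffOn.exists_lipschitzOnWith one_ne_zero
      (convex_closedBall (0 : (ℝ ∙ v)ᗮ) 2) (isCompact_closedBall _ _)
  have hv0 : v ≠ 0 := norm_ne_zero_iff.1 (hv.trans_ne one_ne_zero)
  rw [← cast_finrank_orthogonal_span_singleton hv0]
  calc _ ≤ _ := measure_mono (hemisphere_subset_image_stereoInvFunAux hv)
    _ ≤ _ := hK.hausdorffMeasure_image_le (Nat.cast_nonneg _)
    _ < ∞ := ENNReal.mul_lt_top (ENNReal.rpow_lt_top_of_nonneg (Nat.cast_nonneg _)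
        ENNReal.coe_ne_top) (isCompact_closedBall _ _).measure_lt_top

variable [Nontrivial E]

variable (E) in
lemma hausdorffMeasure_sphere_lt_top : μH[finrank ℝ E - 1] (sphere (0 : E) 1) < ∞ := by
  obtain ⟨v, hv⟩ := exists_norm_eq E zero_le_one
  have hcover : sphere (0 : E) 1 ⊆
      {x ∈ sphere (0 : E) 1 | ⟪v, x⟫ ≤ 0} ∪ {x ∈ sphere (0 : E) 1 | ⟪-v, x⟫ ≤ 0} := by
    intro x hx
    rcases le_total ⟪v, x⟫ 0 with h | h
    · exact Or.inl ⟨hx, h⟩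
    · exact Or.inr ⟨hx, by rwa [inner_neg_left, neg_nonpos]⟩
  exact (measure_mono hcover).trans_lt (measure_union_lt_top
    (hausdorffMeasure_hemisphere_lt_top hv)
    (hausdorffMeasure_hemisphere_lt_top ((norm_neg v).trans hv)))

variable (E) in
lemma hausdorffMeasure_sphere_pos : 0 < μH[finrank ℝ E - 1] (sphere (0 : E) 1) := by
  obtain ⟨v, hv⟩ := exists_norm_eq E zero_le_one
  have hv0 : v ≠ 0 := norm_ne_zero_iff.1 (hv.trans_ne one_ne_zero)
  rw [← cast_finrank_orthogonal_span_singleton hv0]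
  calc 0 < μH[finrank ℝ (ℝ ∙ v)ᗮ] (ball (0 : (ℝ ∙ v)ᗮ) 1) := measure_ball_pos _ _ one_pos
    _ ≤ _ := measure_mono (ball_subset_image_sphere_orthogonalProjection hv)
    _ ≤ _ := (ℝ ∙ v)ᗮ.lipschitzWith_orthogonalProjectionOnto.hausdorffMeasure_image_le
        (Nat.cast_nonneg _) _
    _ = _ := by rw [ENNReal.coe_one, ENNReal.one_rpow, one_mul]

end SphereHausdorffMeasure

section RadialProjection

variable {E : Type*} [NormedAddCommGroup E] [InnerProductSpace ℝ E] [FiniteDimensional ℝ E]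
  [MeasurableSpace E] [BorelSpace E] [Nontrivial E]

lemma uniformlyDistributedOn_map_normalize (t : ℝ) :
    UniformlyDistributedOn ((volume.restrict (ball (0 : E) t)).map fun y => ‖y‖⁻¹ • y)
      (sphere 0 1) := by
  have normalize_measurable : Measurable fun y : E => ‖y‖⁻¹ • y := by fun_prop
  refine uniformlyDistributedOn_sphere ?_ fun e => ?_
  · refine (ae_map_iff normalize_measurable.aemeasurable isClosed_sphere.measurableSet).2
      (ae_restrict_of_ae ?_)
    filter_upwards [Measure.ae_ne volume (0 : E)] with y hy
    rw [dist_zero_right, norm_smul, norm_inv, norm_norm, inv_mul_cancel₀ (norm_ne_zero_iff.2 hy)]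
  · have ball_preserving : MeasurePreserving e (volume.restrict (ball (0 : E) t))
        (volume.restrict (ball 0 t)) := by
      have := e.measurePreserving.restrict_preimage (measurableSet_ball (x := (0 : E)) (ε := t))
      rwa [e.preimage_ball, map_zero] at this
    have normalize_semiconj : Function.Semiconj (fun y : E => ‖y‖⁻¹ • y) e e := fun y => by
      simp only [e.norm_map, map_smul]
    exact (normalize_measurable.measurePreserving _).of_semiconj ball_preserving normalize_semiconj
      e.continuous.measurable

variable {σ : Measure E} [IsFiniteMeasure σ] [NeZero σ]

lemma map_normalize_restrict_ball (hσ : UniformlyDistributedOn σ (sphere 0 1)) (t : ℝ) :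
    (volume.restrict (ball (0 : E) t)).map (fun y => ‖y‖⁻¹ • y) =
      (volume (ball (0 : E) t) / σ univ) • σ := by
  have := isFiniteMeasure_restrict.2 (measure_ball_lt_top (μ := volume) (x := (0 : E)) (r := t)).ne
  have proportional := (uniformlyDistributedOn_map_normalize (E := E) t).measure_univ_smul_eq hσ
  rw [Measure.map_apply (by fun_prop) MeasurableSet.univ, preimage_univ,
    Measure.restrict_apply_univ] at proportional
  rw [ENNReal.div_eq_inv_mul, mul_smul, ← proportional, smul_smul,
    ENNReal.inv_mul_cancel (NeZero.ne _) (measure_ne_top σ univ), one_smul]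

lemma setLAverage_ball_comp_normalize (hσ : UniformlyDistributedOn σ (sphere 0 1)) {t : ℝ}
    (ht : 0 < t) {h : E → ℝ≥0∞} (hh : Measurable h) :
    ⨍⁻ y in ball (0 : E) t, h (‖y‖⁻¹ • y) ∂volume = ⨍⁻ y, h y ∂σ := by
  rw [setLAverage_eq, ← lintegral_map hh (by fun_prop), map_normalize_restrict_ball hσ,
    lintegral_smul_measure, laverage_eq, smul_eq_mul]
  simp only [div_eq_mul_inv]
  rw [mul_right_comm, mul_right_comm _ _ (volume _)⁻¹,
    ENNReal.mul_inv_cancel (measure_ball_pos volume 0 ht).ne' measure_ball_lt_top.ne, one_mul,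
    mul_comm]

lemma integrableOn_ball_comp_normalize {F : Type*} [NormedAddCommGroup F]
    (hσ : UniformlyDistributedOn σ (sphere 0 1)) (t : ℝ) {h : E → F} (hh : Integrable h σ) :
    IntegrableOn (fun y => h (‖y‖⁻¹ • y)) (ball (0 : E) t) := by
  refine Integrable.comp_measurable (f := fun y : E => ‖y‖⁻¹ • y) ?_ (by fun_prop)
  rw [map_normalize_restrict_ball hσ]
  exact hh.smul_measure (ENNReal.div_ne_top measure_ball_lt_top.ne (NeZero.ne _))

lemma setIntegral_ball_comp_normalize {F : Type*} [NormedAddCommGroup F] [NormedSpace ℝ F]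
    (hσ : UniformlyDistributedOn σ (sphere 0 1)) (t : ℝ) {h : E → F}
    (hh : AEStronglyMeasurable h σ) :
    ∫ y in ball (0 : E) t, h (‖y‖⁻¹ • y) =
      (volume (ball (0 : E) t) / σ univ).toReal • ∫ y, h y ∂σ := by
  rw [← integral_map (φ := fun y : E => ‖y‖⁻¹ • y) (by fun_prop),
    map_normalize_restrict_ball hσ, integral_smul_measure]
  rw [map_normalize_restrict_ball hσ]
  exact hh.smul_measure _

end RadialProjection

section SphereMeasure

variable {n : ℕ}

lemma uniformlyDistributedOn_sphereMeasure :
    UniformlyDistributedOn (sphereMeasure n) (sphere 0 1) := by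
  refine uniformlyDistributedOn_sphere (ae_restrict_mem isClosed_sphere.measurableSet) fun e => ?_
  have := (e.toIsometryEquiv.measurePreserving_hausdorffMeasure ((n : ℝ) - 1)).restrict_preimage
    (isClosed_sphere (x := (0 : Rn n)) (ε := 1)).measurableSet
  rwa [IsometryEquiv.preimage_sphere, ← e.toIsometryEquiv_symm, e.symm.coe_toIsometryEquiv,
    map_zero] at this

variable [NeZero n]

instance isFiniteMeasure_sphereMeasure : IsFiniteMeasure (sphereMeasure n) where
  measure_univ_lt_top := by
    simpa only [sphereMeasure, Measure.restrict_apply_univ, finrank_euclideanSpace_fin] using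
      hausdorffMeasure_sphere_lt_top (Rn n)

instance neZero_sphereMeasure : NeZero (sphereMeasure n) where
  out := by
    rw [← Measure.measure_univ_pos]
    simpa only [sphereMeasure, Measure.restrict_apply_univ, finrank_euclideanSpace_fin] using
      hausdorffMeasure_sphere_pos (Rn n)

end SphereMeasure

section WeakLp

lemma lintegral_enorm_rpow_lt_top_of_tail_le {α F : Type*} [MeasurableSpace α] {μ : Measure α}
    [IsFiniteMeasure μ] [NormedAddCommGroup F] {f : α → F} (hf : AEStronglyMeasurable f μ)
    {q r : ℝ} (hq : 0 < q) (hqr : q < r) {K : ℝ≥0∞} (hK : K ≠ ∞)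
    (htail : ∀ t : ℝ, 0 < t → μ {x | t < ‖f x‖} ≤ K * ENNReal.ofReal (t ^ (-r))) :
    ∫⁻ x, ‖f x‖ₑ ^ q ∂μ < ∞ := by
  have small_levels : ∫⁻ t in Ioc (0 : ℝ) 1, μ {x | t < ‖f x‖} * ENNReal.ofReal (t ^ (q - 1)) < ∞ :=
    calc _ ≤ ∫⁻ t in Ioc (0 : ℝ) 1, μ univ * ENNReal.ofReal (t ^ (q - 1)) :=
          lintegral_mono fun t => mul_le_mul' (measure_mono (subset_univ _)) le_rfl
      _ = μ univ * ∫⁻ t in Ioc (0 : ℝ) 1, ENNReal.ofReal (t ^ (q - 1)) :=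
          lintegral_const_mul' _ _ (measure_ne_top μ univ)
      _ < ∞ := ENNReal.mul_lt_top (measure_lt_top μ univ)
          (intervalIntegral.intervalIntegrable_rpow' (by linarith)).1.lintegral_lt_top
  have large_levels : ∫⁻ t in Ioi (1 : ℝ), μ {x | t < ‖f x‖} * ENNReal.ofReal (t ^ (q - 1)) < ∞ :=
    calc _ ≤ ∫⁻ t in Ioi (1 : ℝ), K * ENNReal.ofReal (t ^ (-r + (q - 1))) := by
          refine setLIntegral_mono' measurableSet_Ioi fun t ht => ?_
          have ht0 : 0 < t := one_pos.trans ht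
          rw [Real.rpow_add ht0, ENNReal.ofReal_mul (by positivity), ← mul_assoc]
          exact mul_le_mul' (htail t ht0) le_rfl
      _ = K * ∫⁻ t in Ioi (1 : ℝ), ENNReal.ofReal (t ^ (-r + (q - 1))) :=
          lintegral_const_mul' _ _ hK
      _ < ∞ := ENNReal.mul_lt_top hK.lt_top
          (integrableOn_Ioi_rpow_of_lt (by linarith) one_pos).lintegral_lt_top
  calc ∫⁻ x, ‖f x‖ₑ ^ q ∂μ = ∫⁻ x, ENNReal.ofReal (‖f x‖ ^ q) ∂μ := by
        simp only [← ofReal_norm, ENNReal.ofReal_rpow_of_nonneg (norm_nonneg _) hq.le]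
    _ = ENNReal.ofReal q *
          ∫⁻ t in Ioc 0 1 ∪ Ioi 1, μ {x | t < ‖f x‖} * ENNReal.ofReal (t ^ (q - 1)) := by
        rw [lintegral_rpow_eq_lintegral_meas_lt_mul μ (ae_of_all _ fun x => norm_nonneg (f x))
          hf.norm.aemeasurable hq, Ioc_union_Ioi_eq_Ioi zero_le_one]
    _ < ∞ := ENNReal.mul_lt_top ENNReal.ofReal_lt_top
        ((lintegral_union_le _ _ _).trans_lt (ENNReal.add_lt_top.2 ⟨small_levels, large_levels⟩))

lemma sphereMeasure_lt_abs_le {n : ℕ} {r : ℝ} (hr : 0 < r) (Ω : Rn n → ℝ) {t : ℝ} (ht : 0 < t) :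
    sphereMeasure n {y | t < |Ω y|} ≤ weakLorentzSphere n r Ω ^ r * ENNReal.ofReal (t ^ (-r)) := by
  have level_le : ENNReal.ofReal t * sphereMeasure n {y | t < |Ω y|} ^ (1 / r) ≤
      weakLorentzSphere n r Ω :=
    le_iSup₂ (f := fun (t : ℝ) (_ : 0 < t) =>
      ENNReal.ofReal t * sphereMeasure n {y | t < |Ω y|} ^ (1 / r)) t ht
  rw [Real.rpow_neg ht.le, ENNReal.ofReal_inv_of_pos (Real.rpow_pos_of_pos ht r),
    ← div_eq_mul_inv, ENNReal.le_div_iff_mul_le (by simp [Real.rpow_pos_of_pos ht r]) (by simp)]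
  calc _ = (ENNReal.ofReal t * sphereMeasure n {y | t < |Ω y|} ^ (1 / r)) ^ r := by
        rw [ENNReal.mul_rpow_of_nonneg _ _ hr.le, ← ENNReal.rpow_mul, one_div_mul_cancel hr.ne',
          ENNReal.rpow_one, ENNReal.ofReal_rpow_of_pos ht, mul_comm]
    _ ≤ _ := ENNReal.rpow_le_rpow level_le hr.le

lemma lintegral_enorm_rpow_sphereMeasure_lt_top {n : ℕ} [NeZero n] {q r : ℝ} (hq : 0 < q)
    (hqr : q < r) {Ω : Rn n → ℝ} (hΩ : Measurable Ω) (hweak : weakLorentzSphere n r Ω < ∞) :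
    ∫⁻ y, ‖Ω y‖ₑ ^ q ∂sphereMeasure n < ∞ :=
  lintegral_enorm_rpow_lt_top_of_tail_le hΩ.aestronglyMeasurable hq hqr
    (ENNReal.rpow_ne_top_of_nonneg (hq.trans hqr).le hweak.ne)
    fun _ => sphereMeasure_lt_abs_le (hq.trans hqr) Ω

end WeakLp

section Averages

variable {α : Type*} [MeasurableSpace α] {μ : Measure α}

lemma laverage_le_of_forall_le {f : α → ℝ≥0∞} {c : ℝ≥0∞} (h : ∀ x, f x ≤ c) :
    ⨍⁻ x, f x ∂μ ≤ c :=
  (laverage_le_essSup f).trans (essSup_le_of_ae_le c (ae_of_all _ h))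

lemma lintegral_le_lintegral_rpow [IsZeroOrProbabilityMeasure μ] {f : α → ℝ≥0∞}
    (hf : AEMeasurable f μ) {p : ℝ} (hp : 1 ≤ p) :
    ∫⁻ x, f x ∂μ ≤ (∫⁻ x, f x ^ p ∂μ) ^ (1 / p) := by
  have hp0 : p ≠ 0 := (one_pos.trans_le hp).ne'
  calc ∫⁻ x, f x ∂μ = ∫⁻ x, (f x ^ p) ^ (1 / p) * 1 ^ (1 - 1 / p) ∂μ := by
        simp only [← ENNReal.rpow_mul, mul_one_div_cancel hp0, ENNReal.rpow_one, ENNReal.one_rpow,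
          mul_one]
    _ ≤ (∫⁻ x, f x ^ p ∂μ) ^ (1 / p) * (∫⁻ _, 1 ∂μ) ^ (1 - 1 / p) :=
        ENNReal.lintegral_mul_norm_pow_le (hf.pow_const p) aemeasurable_const (by positivity)
          (sub_nonneg.2 (div_le_one_of_le₀ hp (by positivity))) (add_sub_cancel _ _)
    _ ≤ (∫⁻ x, f x ^ p ∂μ) ^ (1 / p) * 1 := by
        rw [lintegral_one]
        gcongr
        exact ENNReal.rpow_le_one prob_le_one (sub_nonneg.2 (div_le_one_of_le₀ hp (by positivity)))
    _ = _ := mul_one _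

lemma lintegral_mul_le_of_le {f g : α → ℝ≥0∞} (hf : AEMeasurable f μ) (hg : AEMeasurable g μ)
    {A : ℝ≥0∞} (hA : ∀ x, g x ≤ A) {q : ℝ} (hq : 1 ≤ q) :
    ∫⁻ x, f x * g x ∂μ ≤
      (∫⁻ x, f x ^ q ∂μ) ^ (1 / q) * A ^ (1 / q) * (∫⁻ x, g x ∂μ) ^ (1 - 1 / q) := by
  have hq0 : 0 < q := one_pos.trans_le hq
  have hq1 : 0 ≤ 1 - 1 / q := sub_nonneg.2 (div_le_one_of_le₀ hq hq0.le)
  calc ∫⁻ x, f x * g x ∂μ = ∫⁻ x, (f x ^ q * g x) ^ (1 / q) * g x ^ (1 - 1 / q) ∂μ := by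
        refine lintegral_congr fun x => ?_
        rw [ENNReal.mul_rpow_of_nonneg _ _ (by positivity), ← ENNReal.rpow_mul,
          mul_one_div_cancel hq0.ne', ENNReal.rpow_one, mul_assoc,
          ← ENNReal.rpow_add_of_nonneg _ _ (by positivity) hq1, add_sub_cancel, ENNReal.rpow_one]
    _ ≤ (∫⁻ x, f x ^ q * g x ∂μ) ^ (1 / q) * (∫⁻ x, g x ∂μ) ^ (1 - 1 / q) :=
        ENNReal.lintegral_mul_norm_pow_le ((hf.pow_const q).mul hg) hg (by positivity) hq1
          (add_sub_cancel _ _)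
    _ ≤ (∫⁻ x, f x ^ q * A ∂μ) ^ (1 / q) * (∫⁻ x, g x ∂μ) ^ (1 - 1 / q) := by
        gcongr with x
        exact hA x
    _ = _ := by
        rw [lintegral_mul_const'' _ (hf.pow_const q),
          ENNReal.mul_rpow_of_nonneg _ _ (by positivity)]

lemma enorm_sub_average_le {F : Type*} [NormedAddCommGroup F] [NormedSpace ℝ F] [CompleteSpace F]
    [IsFiniteMeasure μ] [NeZero μ] {f : α → F} (hf : Integrable f μ) (c : F) :
    ‖c - ⨍ x, f x ∂μ‖ₑ ≤ ⨍⁻ x, ‖c - f x‖ₑ ∂μ := by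
  have hsub : c - ⨍ x, f x ∂μ = ⨍ x, (c - f x) ∂μ := by
    conv_lhs => rw [← average_const μ c]
    exact (integral_sub (integrable_const c) hf.to_average).symm
  rw [hsub]
  exact enorm_integral_le_lintegral_enorm _

end Averages

lemma lintegral_Ioo_one_sub_rpow {p : ℝ} (hp : -1 < p) :
    ∫⁻ s in Ioo (0 : ℝ) 1, ENNReal.ofReal ((1 - s) ^ p) = ENNReal.ofReal (p + 1)⁻¹ := by
  have integral_eq : ∫ s in (0 : ℝ)..1, (1 - s) ^ p = (p + 1)⁻¹ := by
    rw [intervalIntegral.integral_comp_sub_left (fun s => s ^ p), sub_self, sub_zero,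
      integral_rpow (Or.inl hp), Real.one_rpow, Real.zero_rpow (by linarith), sub_zero, one_div]
  have integrable : IntervalIntegrable (fun s : ℝ => (1 - s) ^ p) volume 0 1 := by
    simpa using ((intervalIntegral.intervalIntegrable_rpow' hp (a := 0) (b := 1)).comp_sub_left
      1).symm
  rw [setLIntegral_congr Ioo_ae_eq_Ioc, ← integral_eq,
    intervalIntegral.integral_of_le zero_le_one, ofReal_integral_eq_lintegral_ofReal integrable.1]
  exact (ae_restrict_iff' measurableSet_Ioc).2
    (ae_of_all _ fun s hs => Real.rpow_nonneg (sub_nonneg.2 hs.2) p)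

section SegmentAverages

open Module

variable {E : Type*} [NormedAddCommGroup E] [NormedSpace ℝ E]

lemma enorm_sub_le_enorm_mul_lintegral_enorm_fderiv {F : Type*} [NormedAddCommGroup F]
    [NormedSpace ℝ F] {f : E → F} (hf : ContDiff ℝ 1 f) (y z : E) :
    ‖f y - f z‖ₑ ≤
      ‖y - z‖ₑ * ∫⁻ s in Ioo (0 : ℝ) 1, ‖fderiv ℝ f ((1 - s) • z + s • y)‖ₑ := by
  let γ : ℝ → E := fun s => (1 - s) • z + s • y
  have hγ (s : ℝ) : HasDerivAt γ (y - z) s := by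
    simpa [neg_add_eq_sub] using
      (((hasDerivAt_id s).const_sub 1).smul_const z).fun_add ((hasDerivAt_id s).smul_const y)
  have hfγ (s : ℝ) : deriv (f ∘ γ) s = fderiv ℝ f (γ s) (y - z) :=
    ((hf.differentiable one_ne_zero (γ s)).hasFDerivAt.comp_hasDerivAt s (hγ s)).deriv
  have hγ1 : ContDiff ℝ 1 (f ∘ γ) := hf.comp (by fun_prop)
  calc ‖f y - f z‖ₑ = ‖(f ∘ γ) 1 - (f ∘ γ) 0‖ₑ := by simp [γ]
    _ ≤ ∫⁻ s in Ioo (0 : ℝ) 1, ‖deriv (f ∘ γ) s‖ₑ := by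
        rw [setLIntegral_congr Ioo_ae_eq_Icc]
        exact enorm_sub_le_lintegral_deriv_of_contDiffOn_Icc hγ1.contDiffOn zero_le_one
    _ ≤ ∫⁻ s in Ioo (0 : ℝ) 1, ‖y - z‖ₑ * ‖fderiv ℝ f (γ s)‖ₑ := by
        gcongr with s
        rw [hfγ, mul_comm]
        exact (fderiv ℝ f (γ s)).le_opENorm _
    _ = _ := lintegral_const_mul' _ _ enorm_ne_top

variable [FiniteDimensional ℝ E] [MeasurableSpace E] [BorelSpace E]

lemma enorm_sub_setAverage_le_ediam_mul {F : Type*} [NormedAddCommGroup F] [NormedSpace ℝ F]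
    [CompleteSpace F] {μ : Measure E} [IsFiniteMeasureOnCompacts μ] {f : E → F}
    (hf : ContDiff ℝ 1 f) {B : Set E} (hB : MeasurableSet B) (hBb : Bornology.IsBounded B)
    (hB0 : μ B ≠ 0) {y : E} (hy : y ∈ B) :
    ‖f y - ⨍ z in B, f z ∂μ‖ₑ ≤ ediam B *
      ⨍⁻ z in B, (∫⁻ s in Ioo (0 : ℝ) 1, ‖fderiv ℝ f ((1 - s) • z + s • y)‖ₑ) ∂μ := by
  have : IsFiniteMeasure (μ.restrict B) := isFiniteMeasure_restrict.2 hBb.measure_lt_top.ne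
  have : NeZero (μ.restrict B) := ⟨Measure.restrict_eq_zero.not.2 hB0⟩
  have hfB : IntegrableOn f B μ :=
    (hf.continuous.continuousOn.integrableOn_compact hBb.isCompact_closure).mono_set subset_closure
  calc ‖f y - ⨍ z in B, f z ∂μ‖ₑ ≤ ⨍⁻ z in B, ‖f y - f z‖ₑ ∂μ := enorm_sub_average_le hfB (f y)
    _ ≤ ⨍⁻ z in B, ediam B *
          (∫⁻ s in Ioo (0 : ℝ) 1, ‖fderiv ℝ f ((1 - s) • z + s • y)‖ₑ) ∂μ := by
        refine laverage_mono_ae ?_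
        filter_upwards [ae_restrict_mem hB] with z hz
        refine (enorm_sub_le_enorm_mul_lintegral_enorm_fderiv hf y z).trans ?_
        gcongr
        rw [← edist_eq_enorm_sub]
        exact edist_le_ediam_of_mem hy hz
    _ = _ := lintegral_const_mul' _ _ hBb.ediam_ne_top

lemma lintegral_mul_lintegral_segment_swap (ν : Measure E) [SFinite ν] {Θ g : E → ℝ≥0∞}
    (hΘ : Measurable Θ) (hg : Measurable g) :
    ∫⁻ y, Θ y * ∫⁻ z, (∫⁻ s in Ioo (0 : ℝ) 1, g ((1 - s) • z + s • y)) ∂ν ∂ν =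
      ∫⁻ s in Ioo (0 : ℝ) 1, ∫⁻ y, Θ y * ∫⁻ z, g ((1 - s) • z + s • y) ∂ν ∂ν := by
  have inner_measurable : Measurable fun p : E × ℝ => ∫⁻ z, g ((1 - p.2) • z + p.2 • p.1) ∂ν :=
    Measurable.lintegral_prod_right' (f := fun p : (E × ℝ) × E =>
      g ((1 - p.1.2) • p.2 + p.1.2 • p.1.1)) (by fun_prop)
  calc _ = ∫⁻ y, (∫⁻ s in Ioo (0 : ℝ) 1, Θ y * ∫⁻ z, g ((1 - s) • z + s • y) ∂ν) ∂ν := by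
        refine lintegral_congr fun y => ?_
        rw [lintegral_lintegral_swap (by fun_prop)]
        exact (lintegral_const_mul _ (inner_measurable.comp measurable_prodMk_left)).symm
    _ = _ := lintegral_lintegral_swap
        ((hΘ.comp measurable_fst).mul inner_measurable).aemeasurable

variable (μ : Measure E) [μ.IsAddHaarMeasure]

lemma lintegral_comp_smul_add {a : ℝ} (ha : 0 < a) (v : E) {h : E → ℝ≥0∞} (hh : Measurable h) :
    ∫⁻ z, h (a • z + v) ∂μ = (ENNReal.ofReal a ^ (finrank ℝ E : ℝ))⁻¹ * ∫⁻ z, h z ∂μ := by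
  rw [← lintegral_map (f := fun w => h (w + v)) (by fun_prop) (measurable_const_smul a),
    Measure.map_addHaar_smul μ ha.ne', lintegral_smul_measure, lintegral_add_right_eq_self,
    abs_of_nonneg (by positivity), ENNReal.ofReal_inv_of_pos (by positivity),
    ENNReal.ofReal_pow ha.le, ENNReal.rpow_natCast, smul_eq_mul]

variable [Nontrivial E] {g : E → ℝ≥0∞} (B : Set E)

lemma setLAverage_comp_smul_add_le (hg : Measurable g) {a : ℝ} (ha : 0 < a) (v : E) :
    ⨍⁻ z in B, g (a • z + v) ∂μ ≤ (ENNReal.ofReal a)⁻¹ *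
      ((μ B)⁻¹ * ∫⁻ z, g z ^ (finrank ℝ E : ℝ) ∂μ) ^ (1 / (finrank ℝ E : ℝ)) := by
  set d : ℝ := (finrank ℝ E : ℝ)
  have hd : 1 ≤ d := Nat.one_le_cast.2 finrank_pos
  calc ⨍⁻ z in B, g (a • z + v) ∂μ
      ≤ (⨍⁻ z in B, g (a • z + v) ^ d ∂μ) ^ (1 / d) :=
        lintegral_le_lintegral_rpow (by fun_prop) hd
    _ ≤ ((μ B)⁻¹ * ∫⁻ z, g (a • z + v) ^ d ∂μ) ^ (1 / d) := by
        rw [setLAverage_eq, ENNReal.div_eq_inv_mul]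
        gcongr
        exact Measure.restrict_le_self
    _ = ((ENNReal.ofReal a ^ d)⁻¹ * ((μ B)⁻¹ * ∫⁻ z, g z ^ d ∂μ)) ^ (1 / d) := by
        rw [lintegral_comp_smul_add μ ha v (hg.pow_const d), mul_left_comm]
    _ = _ := by
        rw [ENNReal.mul_rpow_of_nonneg _ _ (by positivity), ENNReal.inv_rpow, ← ENNReal.rpow_mul,
          mul_one_div_cancel (by positivity), ENNReal.rpow_one]

lemma setLAverage_setLAverage_comp_segment_le (hg : Measurable g) {s : ℝ} (hs : s ∈ Ioo (0 : ℝ) 1) :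
    ⨍⁻ y in B, ⨍⁻ z in B, g ((1 - s) • z + s • y) ∂μ ∂μ ≤
      2 * ((μ B)⁻¹ * ∫⁻ z, g z ^ (finrank ℝ E : ℝ) ∂μ) ^ (1 / (finrank ℝ E : ℝ)) := by
  have inv_le_two {a : ℝ} (ha : 1 / 2 ≤ a) : (ENNReal.ofReal a)⁻¹ ≤ 2 := by
    rw [ENNReal.inv_le_iff_inv_le, ← ENNReal.ofReal_ofNat 2,
      ← ENNReal.ofReal_inv_of_pos two_pos, ← one_div]
    exact ENNReal.ofReal_le_ofReal ha
  -- The average in the variable whose coefficient is at least `1/2` is taken first.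
  rcases le_total (1 / 2) (1 - s) with h | h
  · refine laverage_le_of_forall_le fun y => ?_
    exact (setLAverage_comp_smul_add_le μ B hg (sub_pos.2 hs.2) (s • y)).trans
      (mul_le_mul' (inv_le_two h) le_rfl)
  · have swap : ⨍⁻ y in B, ⨍⁻ z in B, g ((1 - s) • z + s • y) ∂μ ∂μ =
        ⨍⁻ z in B, ⨍⁻ y in B, g ((1 - s) • z + s • y) ∂μ ∂μ :=
      lintegral_lintegral_swap (by fun_prop)
    rw [swap]
    refine laverage_le_of_forall_le fun z => ?_
    simp_rw [add_comm ((1 - s) • z)]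
    exact (setLAverage_comp_smul_add_le μ B hg hs.1 ((1 - s) • z)).trans
      (mul_le_mul' (inv_le_two (by linarith)) le_rfl)

lemma setLAverage_mul_setLAverage_comp_segment_le (hg : Measurable g) {Θ : E → ℝ≥0∞}
    (hΘ : Measurable Θ) {q : ℝ} (hq : 1 ≤ q) {s : ℝ} (hs : s ∈ Ioo (0 : ℝ) 1) :
    ⨍⁻ y in B, Θ y * ⨍⁻ z in B, g ((1 - s) • z + s • y) ∂μ ∂μ ≤
      ENNReal.ofReal ((1 - s) ^ (-(1 / q))) * (2 * (⨍⁻ y in B, Θ y ^ q ∂μ) ^ (1 / q) *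
        ((μ B)⁻¹ * ∫⁻ z, g z ^ (finrank ℝ E : ℝ) ∂μ) ^ (1 / (finrank ℝ E : ℝ))) := by
  set M := ((μ B)⁻¹ * ∫⁻ z, g z ^ (finrank ℝ E : ℝ) ∂μ) ^ (1 / (finrank ℝ E : ℝ))
  set T := (⨍⁻ y in B, Θ y ^ q ∂μ) ^ (1 / q)
  have hq1 : 0 ≤ 1 - 1 / q := sub_nonneg.2 (div_le_one_of_le₀ hq (by positivity))
  have inner_measurable : Measurable fun y => ⨍⁻ z in B, g ((1 - s) • z + s • y) ∂μ :=
    Measurable.lintegral_prod_right' (f := fun p : E × E => g ((1 - s) • p.2 + s • p.1))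
      (by fun_prop)
  have two_rpow_le : (2 : ℝ≥0∞) ^ (1 - 1 / q) ≤ 2 :=
    (ENNReal.rpow_le_rpow_of_exponent_le one_le_two
      (sub_le_self 1 (by positivity))).trans_eq (ENNReal.rpow_one 2)
  calc ⨍⁻ y in B, Θ y * ⨍⁻ z in B, g ((1 - s) • z + s • y) ∂μ ∂μ
      ≤ T * ((ENNReal.ofReal (1 - s))⁻¹ * M) ^ (1 / q) *
          (⨍⁻ y in B, ⨍⁻ z in B, g ((1 - s) • z + s • y) ∂μ ∂μ) ^ (1 - 1 / q) :=
        lintegral_mul_le_of_le hΘ.aemeasurable inner_measurable.aemeasurable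
          (fun y => setLAverage_comp_smul_add_le μ B hg (sub_pos.2 hs.2) (s • y)) hq
    _ ≤ T * ((ENNReal.ofReal (1 - s))⁻¹ * M) ^ (1 / q) * (2 * M) ^ (1 - 1 / q) := by
        gcongr
        exact setLAverage_setLAverage_comp_segment_le μ B hg hs
    _ = ENNReal.ofReal ((1 - s) ^ (-(1 / q))) *
          (2 ^ (1 - 1 / q) * T * (M ^ (1 / q) * M ^ (1 - 1 / q))) := by
        rw [ENNReal.mul_rpow_of_nonneg _ _ (by positivity), ENNReal.mul_rpow_of_nonneg _ _ hq1,
          ENNReal.inv_rpow, ← ENNReal.rpow_neg, ENNReal.ofReal_rpow_of_pos (sub_pos.2 hs.2)]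
        ring
    _ ≤ ENNReal.ofReal ((1 - s) ^ (-(1 / q))) * (2 * T * M) := by
        rw [← ENNReal.rpow_add_of_nonneg _ _ (by positivity) hq1, add_sub_cancel, ENNReal.rpow_one]
        gcongr

theorem setLAverage_mul_enorm_sub_setAverage_le {F : Type*} [NormedAddCommGroup F]
    [NormedSpace ℝ F] [CompleteSpace F] {f : E → F} (hf : ContDiff ℝ 1 f) {B : Set E}
    (hB : MeasurableSet B) (hBb : Bornology.IsBounded B) (hB0 : μ B ≠ 0)
    {Θ : E → ℝ≥0∞} (hΘ : Measurable Θ) {q : ℝ} (hq : 1 < q) :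
    ⨍⁻ y in B, Θ y * ‖f y - ⨍ z in B, f z ∂μ‖ₑ ∂μ ≤
      ediam B * (ENNReal.ofReal (1 - 1 / q)⁻¹ * (2 * (⨍⁻ y in B, Θ y ^ q ∂μ) ^ (1 / q) *
        ((μ B)⁻¹ * ∫⁻ z, ‖fderiv ℝ f z‖ₑ ^ (finrank ℝ E : ℝ) ∂μ) ^ (1 / (finrank ℝ E : ℝ)))) := by
  have : IsFiniteMeasure (μ.restrict B) := isFiniteMeasure_restrict.2 hBb.measure_lt_top.ne
  have hg : Measurable fun z => ‖fderiv ℝ f z‖ₑ :=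
    (hf.continuous_fderiv one_ne_zero).enorm.measurable
  calc ⨍⁻ y in B, Θ y * ‖f y - ⨍ z in B, f z ∂μ‖ₑ ∂μ
      ≤ ⨍⁻ y in B, ediam B * (Θ y *
          ⨍⁻ z in B, (∫⁻ s in Ioo (0 : ℝ) 1, ‖fderiv ℝ f ((1 - s) • z + s • y)‖ₑ) ∂μ) ∂μ := by
        refine laverage_mono_ae ?_
        filter_upwards [ae_restrict_mem hB] with y hy
        rw [mul_left_comm]
        exact mul_le_mul' le_rfl (enorm_sub_setAverage_le_ediam_mul hf hB hBb hB0 hy)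
    _ = ediam B * ⨍⁻ y in B, Θ y *
          ⨍⁻ z in B, (∫⁻ s in Ioo (0 : ℝ) 1, ‖fderiv ℝ f ((1 - s) • z + s • y)‖ₑ) ∂μ ∂μ :=
        lintegral_const_mul' _ _ hBb.ediam_ne_top
    _ = ediam B * ∫⁻ s in Ioo (0 : ℝ) 1, ⨍⁻ y in B, Θ y *
          ⨍⁻ z in B, ‖fderiv ℝ f ((1 - s) • z + s • y)‖ₑ ∂μ ∂μ :=
        congrArg _ (lintegral_mul_lintegral_segment_swap _ hΘ hg)
    _ ≤ ediam B * ∫⁻ s in Ioo (0 : ℝ) 1, ENNReal.ofReal ((1 - s) ^ (-(1 / q))) * _ :=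
        mul_le_mul' le_rfl (setLIntegral_mono' measurableSet_Ioo fun s hs =>
          setLAverage_mul_setLAverage_comp_segment_le μ B hg hΘ hq.le hs)
    _ = _ := by
        rw [lintegral_mul_const _ (by fun_prop), lintegral_Ioo_one_sub_rpow, neg_add_eq_sub]
        exact neg_lt_neg ((div_lt_one (by positivity)).2 hq)

lemma ofReal_mul_inv_measure_ball_mul_rpow (x : E) {t : ℝ} (ht : 0 < t) (I : ℝ≥0∞) :
    ENNReal.ofReal t * ((μ (ball x t))⁻¹ * I) ^ (1 / (finrank ℝ E : ℝ)) =
      ((μ (ball 0 1))⁻¹ * I) ^ (1 / (finrank ℝ E : ℝ)) := by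
  have hd : finrank ℝ E ≠ 0 := finrank_pos.ne'
  have ofReal_pow_ne_zero : ENNReal.ofReal t ^ finrank ℝ E ≠ 0 :=
    pow_ne_zero _ (ENNReal.ofReal_pos.2 ht).ne'
  have ofReal_pow_ne_top : ENNReal.ofReal t ^ finrank ℝ E ≠ ∞ :=
    ENNReal.pow_ne_top ENNReal.ofReal_ne_top
  calc _ = (ENNReal.ofReal t ^ finrank ℝ E * ((μ (ball x t))⁻¹ * I)) ^
          (1 / (finrank ℝ E : ℝ)) := by
        rw [ENNReal.mul_rpow_of_nonneg (ENNReal.ofReal t ^ _) _ (by positivity), one_div,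
          ENNReal.pow_rpow_inv_natCast hd]
    _ = _ := by
        rw [Measure.addHaar_ball_of_pos μ x ht, ENNReal.ofReal_pow ht.le,
          ENNReal.mul_inv (.inl ofReal_pow_ne_zero) (.inl ofReal_pow_ne_top), ← mul_assoc,
          ← mul_assoc, ENNReal.mul_inv_cancel ofReal_pow_ne_zero ofReal_pow_ne_top, one_mul]

theorem setLAverage_ball_mul_enorm_sub_setAverage_le {F : Type*} [NormedAddCommGroup F]
    [NormedSpace ℝ F] [CompleteSpace F] {f : E → F} (hf : ContDiff ℝ 1 f) (x : E) {t : ℝ}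
    (ht : 0 < t) {Θ : E → ℝ≥0∞} (hΘ : Measurable Θ) {q : ℝ} (hq : 1 < q) :
    ⨍⁻ y in ball x t, Θ y * ‖f y - ⨍ z in ball x t, f z ∂μ‖ₑ ∂μ ≤
      4 * ENNReal.ofReal (1 - 1 / q)⁻¹ * (⨍⁻ y in ball x t, Θ y ^ q ∂μ) ^ (1 / q) *
        ((μ (ball 0 1))⁻¹ * ∫⁻ z, ‖fderiv ℝ f z‖ₑ ^ (finrank ℝ E : ℝ) ∂μ) ^
          (1 / (finrank ℝ E : ℝ)) := by
  refine (setLAverage_mul_enorm_sub_setAverage_le μ hf measurableSet_ball isBounded_ball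
    (measure_ball_pos μ x ht).ne' hΘ hq).trans ?_
  rw [← ofReal_mul_inv_measure_ball_mul_rpow μ x ht]
  calc _ ≤ (2 * ENNReal.ofReal t) * _ := by
        gcongr
        rw [← Metric.eball_ofReal]
        exact Metric.ediam_eball_le
    _ = _ := by ring

end SegmentAverages

section RoughMaximalOperators

lemma fderiv_comp_sub_left {E F : Type*} [NormedAddCommGroup E] [NormedSpace ℝ E]
    [NormedAddCommGroup F] [NormedSpace ℝ F] (f : E → F) (x y : E) :
    fderiv ℝ (fun z => f (x - z)) y = -fderiv ℝ f (x - y) := by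
  simpa [Function.comp_def, fderiv_comp_add_left, ← sub_eq_add_neg, ContinuousLinearMap.ext_iff]
    using (ContinuousLinearEquiv.neg ℝ).comp_right_fderiv (f := fun w => f (x + w)) (x := y)

variable {n : ℕ} {Ω f : Rn n → ℝ}

lemma ballAvg_eq_setAverage_sub (f : Rn n → ℝ) (x : Rn n) (t : ℝ) :
    ballAvg f x t = ⨍ y in ball 0 t, f (x - y) := by
  have ball_preserving :=
    (Measure.measurePreserving_sub_left (volume : Measure (Rn n)) x).restrict_preimage_emb
      (MeasurableEquiv.subLeft x).measurableEmbedding (ball x t)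
  have preimage_ball : (fun y => x - y) ⁻¹' ball x t = ball 0 t := by
    ext y
    simp [dist_eq_norm]
  rw [preimage_ball] at ball_preserving
  rw [ballAvg, setAverage_eq, setAverage_eq,
    ball_preserving.integral_comp (MeasurableEquiv.subLeft x).measurableEmbedding,
    Measure.real, Measure.real, Measure.addHaar_ball_center]

lemma roughMaxSharp_one_eq_iSup_setLAverage (Ω f : Rn n → ℝ) (x : Rn n) :
    roughMaxSharp n 1 Ω f x = ⨆ (t : ℝ) (_ : 0 < t), ⨍⁻ y in ball 0 t, ‖Ω (‖y‖⁻¹ • y)‖ₑ *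
      ‖f (x - y) - ⨍ z in ball 0 t, f (x - z)‖ₑ ∂volume := by
  simp only [roughMaxSharp, sub_self, Real.rpow_zero, ENNReal.ofReal_one, one_mul, ← abs_mul,
    ← Real.enorm_eq_ofReal_abs, enorm_mul, setLAverage_eq, ENNReal.div_eq_inv_mul,
    ballAvg_eq_setAverage_sub]

lemma lqNorm_gradNorm_eq (f : Rn n → ℝ) (p : ℝ) :
    lqNorm n p (fun y => ENNReal.ofReal (gradNorm f y)) =
      (∫⁻ y, ‖fderiv ℝ f y‖ₑ ^ p) ^ (1 / p) := by
  simp only [lqNorm, gradNorm, gradient, LinearIsometryEquiv.norm_map, ofReal_norm]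

variable [NeZero n]

lemma roughMaxSharp_one_le (hΩ : Measurable Ω) {q : ℝ} (hq : 1 < q) (hf : ContDiff ℝ 1 f)
    (x : Rn n) :
    roughMaxSharp n 1 Ω f x ≤
      4 * ENNReal.ofReal (1 - 1 / q)⁻¹ * (⨍⁻ y, ‖Ω y‖ₑ ^ q ∂sphereMeasure n) ^ (1 / q) *
        (volume (ball (0 : Rn n) 1))⁻¹ ^ (1 / (n : ℝ)) *
          lqNorm n n (fun y => ENNReal.ofReal (gradNorm f y)) := by
  rw [roughMaxSharp_one_eq_iSup_setLAverage]
  refine iSup₂_le fun t ht => ?_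
  refine (setLAverage_ball_mul_enorm_sub_setAverage_le volume (f := fun y => f (x - y))
    (by fun_prop) 0 ht (Θ := fun y => ‖Ω (‖y‖⁻¹ • y)‖ₑ) (by fun_prop) hq).trans_eq ?_
  rw [setLAverage_ball_comp_normalize uniformlyDistributedOn_sphereMeasure ht
      (h := fun y => ‖Ω y‖ₑ ^ q) (by fun_prop)]
  simp_rw [fderiv_comp_sub_left, enorm_neg]
  rw [lintegral_sub_left_eq_self (fun y => ‖fderiv ℝ f y‖ₑ ^ _) x, finrank_euclideanSpace_fin,
    ENNReal.mul_rpow_of_nonneg _ _ (by positivity), ← mul_assoc,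
    lqNorm_gradNorm_eq]

lemma setAverage_ball_comp_normalize_mul_eq (hΩ : Integrable Ω (sphereMeasure n))
    (hmean : ∫ y, Ω y ∂sphereMeasure n = 0) {g : Rn n → ℝ} (hg : Continuous g) (c t : ℝ) :
    ⨍ y in ball 0 t, Ω (‖y‖⁻¹ • y) * g y = ⨍ y in ball 0 t, Ω (‖y‖⁻¹ • y) * (g y - c) := by
  have Ω_integrable := integrableOn_ball_comp_normalize uniformlyDistributedOn_sphereMeasure t hΩ
  have Ωg_integrable : IntegrableOn (fun y => Ω (‖y‖⁻¹ • y) * g y) (ball 0 t) :=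
    Ω_integrable.mul_continuousOn_of_subset hg.continuousOn measurableSet_ball
      (isCompact_closedBall 0 t) ball_subset_closedBall
  have Ω_integral_eq_zero : ∫ y in ball (0 : Rn n) t, Ω (‖y‖⁻¹ • y) = 0 := by
    rw [setIntegral_ball_comp_normalize uniformlyDistributedOn_sphereMeasure t
      hΩ.aestronglyMeasurable, hmean, smul_zero]
  simp_rw [setAverage_eq, mul_sub]
  rw [integral_sub Ωg_integrable (Ω_integrable.mul_const c), integral_mul_const,
    Ω_integral_eq_zero, zero_mul, sub_zero]

lemma roughMaxNatural_le_roughMaxSharp (hΩ : Integrable Ω (sphereMeasure n))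
    (hmean : ∫ y, Ω y ∂sphereMeasure n = 0) (hf : Continuous f) (x : Rn n) :
    roughMaxNatural n Ω f x ≤ roughMaxSharp n 1 Ω f x := by
  rw [roughMaxSharp_one_eq_iSup_setLAverage, roughMaxNatural]
  refine iSup₂_mono fun t _ => ?_
  rw [setAverage_ball_comp_normalize_mul_eq hΩ hmean (g := fun y => f (x - y)) (by fun_prop)
    (⨍ z in ball 0 t, f (x - z)), ← Real.enorm_eq_ofReal_abs]
  simp_rw [← enorm_mul]
  exact enorm_integral_le_lintegral_enorm _

end RoughMaximalOperators

theorem statement14_general {n : ℕ} [NeZero n] {r : ℝ} (hr : 1 < r) {Ω : Rn n → ℝ}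
    (hΩ : Measurable Ω) (hweak : weakLorentzSphere n r Ω < ⊤)
    (hmean : ∫ y, Ω y ∂sphereMeasure n = 0) :
    ∃ C > (0 : ℝ), ∀ f : Rn n → ℝ, ContDiff ℝ 1 f → ∀ x,
      roughMaxNatural n Ω f x ≤ roughMaxSharp n 1 Ω f x ∧
      roughMaxSharp n 1 Ω f x ≤
        ENNReal.ofReal C * lqNorm n n (fun y => ENNReal.ofReal (gradNorm f y)) := by
  obtain ⟨q, hq, hqr⟩ := exists_between hr
  have hΩ1 : Integrable Ω (sphereMeasure n) := by
    refine ⟨hΩ.aestronglyMeasurable, ?_⟩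
    simpa [HasFiniteIntegral] using lintegral_enorm_rpow_sphereMeasure_lt_top one_pos hr hΩ hweak
  have hΩq : ⨍⁻ y, ‖Ω y‖ₑ ^ q ∂sphereMeasure n ≠ ∞ := by
    rw [laverage_eq]
    exact ENNReal.div_ne_top
      (lintegral_enorm_rpow_sphereMeasure_lt_top (by positivity) hqr hΩ hweak).ne (NeZero.ne _)
  set A := 4 * ENNReal.ofReal (1 - 1 / q)⁻¹ * (⨍⁻ y, ‖Ω y‖ₑ ^ q ∂sphereMeasure n) ^ (1 / q) *
    (volume (ball (0 : Rn n) 1))⁻¹ ^ (1 / (n : ℝ))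
  have hA : A ≠ ∞ := by
    have := (measure_ball_pos volume (0 : Rn n) one_pos).ne'
    finiteness
  refine ⟨A.toReal + 1, by positivity, fun f hf x =>
    ⟨roughMaxNatural_le_roughMaxSharp hΩ1 hmean hf.continuous x,
      (roughMaxSharp_one_le hΩ hq hf x).trans ?_⟩⟩
  gcongr
  rw [ENNReal.le_ofReal_iff_toReal_le hA (by positivity)]
  exact le_add_of_nonneg_right zero_le_one

/-- For `Ω ∈ L^{r,∞}(𝕊^{n-1})`, `1 < r < ∞`, of mean zero:
`‖M^♮_Ω f‖_∞ ≤ ‖M^#_Ω f‖_∞ ≤ C ‖∇f‖_{L^n}` for `f ∈ C_c^∞`. -/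
theorem statement14 (n : ℕ) (hn : 2 ≤ n) (r : ℝ) (hr : 1 < r)
    (Ω : Rn n → ℝ) (hΩmeas : Measurable Ω)
    (hΩweak : weakLorentzSphere n r Ω < ⊤)
    (hΩint : Integrable Ω (sphereMeasure n))
    (hΩmean : ∫ y, Ω y ∂sphereMeasure n = 0) :
    ∃ C > (0 : ℝ), ∀ f : Rn n → ℝ, IsCcSmooth f →
      essSup (roughMaxNatural n Ω f) volume ≤ essSup (roughMaxSharp n 1 Ω f) volume ∧
      essSup (roughMaxSharp n 1 Ω f) volume ≤
        ENNReal.ofReal C * lqNorm n n (fun x => ENNReal.ofReal (gradNorm f x)) := by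
  have : NeZero n := ⟨by lia⟩
  obtain ⟨C, hC, bound⟩ := statement14_general hr hΩmeas hΩweak hΩmean
  refine ⟨C, hC, fun f hf => ?_⟩
  have bound_f := bound f (hf.1.of_le (by exact_mod_cast le_top))
  exact ⟨essSup_mono_ae (ae_of_all _ fun x => (bound_f x).1),
    essSup_le_of_ae_le _ (ae_of_all _ fun x => (bound_f x).2)⟩

end
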